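/- arXiv:2604.23021 — 3 statements merged into one kernel-verified Lean document; each statement's English description precedes it below -/
import Mathlib

section
/- Let β ≥ 4 be a real number. There exists n₀ (depending on β) such that for every integer n ≥ n₀ and every positive integer m with m = βn/log n, if n balls are thrown independently and uniformly at random into m bins and X₀ denotes the number of empty bins, then E[X₀] ≥ β·n^{1−1/β}/(2 log n). -/
/-!
By linearity of expectation, `E[X₀] = m (1 - 1/m)^n`. Multiplying `e^{-x} (1 + x) ≤ 1` by `1 - x`
gives `e^{-x} (1 - x²) ≤ 1 - x`, and with `x = 1/m` Bernoulli's inequality yields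
`E[X₀] ≥ m e^{-n/m} (1 - n/m²)`. For `m = β n / log n` the main term `m e^{-n/m}` is exactly
`β n^{1 - 1/β} / log n`, while the relative error `n/m² = (log n / β)² / n` tends to `0`; so every
constant `c < 1` may replace `1/2`, for every `β > 0`.
-/

/-- The number of empty bins when the `n` balls land in bins according to `ω`. -/
def emptyBins (n m : ℕ) (ω : Fin n → Fin m) : ℕ :=
  (Finset.univ.filter fun j : Fin m => ∀ i, ω i ≠ j).card

section Counting

variable {ι κ : Type*} [Fintype ι] [Fintype κ] [DecidableEq ι]
  [∀ (ω : ι → κ) (j : κ), Decidable (∀ i, ω i ≠ j)]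

lemma card_filter_forall_ne (j : κ) :
    (Finset.univ.filter fun ω : ι → κ => ∀ i, ω i ≠ j).card
      = (Fintype.card κ - 1) ^ Fintype.card ι := by
  classical
  have avoiding_eq : (Finset.univ.filter fun ω : ι → κ => ∀ i, ω i ≠ j)
      = Fintype.piFinset fun _ => Finset.univ.erase j := by
    ext ω
    simp
  rw [avoiding_eq, Fintype.card_piFinset, Finset.prod_const,
    Finset.card_erase_of_mem (Finset.mem_univ j), Finset.card_univ, Finset.card_univ]

lemma sum_card_filter_forall_ne :
    ∑ ω : ι → κ, (Finset.univ.filter fun j => ∀ i, ω i ≠ j).card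
      = Fintype.card κ * (Fintype.card κ - 1) ^ Fintype.card ι := by
  calc ∑ ω : ι → κ, (Finset.univ.filter fun j => ∀ i, ω i ≠ j).card
      = ∑ j : κ, (Finset.univ.filter fun ω : ι → κ => ∀ i, ω i ≠ j).card := by
        simp only [Finset.card_filter]
        exact Finset.sum_comm
    _ = Fintype.card κ * (Fintype.card κ - 1) ^ Fintype.card ι := by
        simp only [card_filter_forall_ne, Finset.sum_const, Finset.card_univ, smul_eq_mul]

end Counting

lemma exp_neg_mul_one_sub_sq_le {x : ℝ} (hx : x ≤ 1) :
    Real.exp (-x) * (1 - x ^ 2) ≤ 1 - x := by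
  have exp_neg_mul_one_add_le : Real.exp (-x) * (1 + x) ≤ 1 := by
    rw [Real.exp_neg, inv_mul_le_one₀ (Real.exp_pos x), add_comm]
    exact Real.add_one_le_exp x
  calc Real.exp (-x) * (1 - x ^ 2) = Real.exp (-x) * (1 + x) * (1 - x) := by ring
    _ ≤ 1 - x := mul_le_of_le_one_left (sub_nonneg.2 hx) exp_neg_mul_one_add_le

lemma exp_neg_mul_one_sub_le_one_sub_pow {x : ℝ} (hx : |x| ≤ 1) (n : ℕ) :
    Real.exp (-(n * x)) * (1 - n * x ^ 2) ≤ (1 - x) ^ n := by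
  have one_sub_sq_nonneg : 0 ≤ 1 - x ^ 2 := sub_nonneg.2 ((sq_le_one_iff_abs_le_one x).2 hx)
  have bernoulli : 1 - n * x ^ 2 ≤ (1 - x ^ 2) ^ n := by
    simpa only [mul_neg, ← sub_eq_add_neg] using
      one_add_mul_le_pow (a := -x ^ 2) (by linarith) n
  calc Real.exp (-(n * x)) * (1 - n * x ^ 2)
      ≤ Real.exp (-(n * x)) * (1 - x ^ 2) ^ n := by gcongr
    _ = (Real.exp (-x) * (1 - x ^ 2)) ^ n := by rw [mul_pow, ← Real.exp_nat_mul, mul_neg]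
    _ ≤ (1 - x) ^ n := by
        gcongr
        exact exp_neg_mul_one_sub_sq_le (le_of_abs_le hx)

lemma rpow_one_sub_one_div_eq_mul_exp {x : ℝ} (hx : 0 < x) (β : ℝ) :
    x ^ (1 - 1 / β) = x * Real.exp (-(Real.log x / β)) := by
  rw [Real.rpow_sub hx, Real.rpow_one, Real.rpow_def_of_pos hx, Real.exp_neg, mul_one_div,
    div_eq_mul_inv]

lemma tendsto_log_div_sq_div_self_atTop (β : ℝ) :
    Filter.Tendsto (fun x : ℝ => (Real.log x / β) ^ 2 / x) Filter.atTop (nhds 0) := by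
  have h := (Real.isLittleO_pow_log_id_atTop (n := 2)).tendsto_div_nhds_zero.div_const (β ^ 2)
  simpa only [div_pow, div_right_comm, id_eq, zero_div] using h

/-- The expectation `E[X₀]` of the number of empty bins when `n` balls are thrown independently and
uniformly into `m` bins, as the average over the `m ^ n` outcomes. -/
noncomputable def expectedEmptyBins (n m : ℕ) : ℝ :=
  (∑ ω : Fin n → Fin m, (emptyBins n m ω : ℝ)) / (m : ℝ) ^ n

lemma expectedEmptyBins_eq (n m : ℕ) :
    expectedEmptyBins n m = m * (1 - (m : ℝ)⁻¹) ^ n := by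
  have sum_eq : ∑ ω, emptyBins n m ω = m * (m - 1) ^ n := by
    simpa only [emptyBins, Fintype.card_fin] using
      sum_card_filter_forall_ne (ι := Fin n) (κ := Fin m)
  rw [expectedEmptyBins, ← Nat.cast_sum, sum_eq]
  rcases m.eq_zero_or_pos with rfl | hm
  · simp
  · have hm' : (m : ℝ) ≠ 0 := by positivity
    rw [Nat.cast_mul, Nat.cast_pow, Nat.cast_sub hm, Nat.cast_one, mul_div_assoc, ← div_pow,
      sub_div, div_self hm', one_div]

lemma mul_exp_mul_one_sub_le_expectedEmptyBins (n m : ℕ) :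
    m * Real.exp (-(n / m : ℝ)) * (1 - (n / m ^ 2 : ℝ)) ≤ expectedEmptyBins n m := by
  have abs_inv_le : |(m : ℝ)⁻¹| ≤ 1 := by
    rw [abs_of_nonneg (by positivity)]
    exact Nat.cast_inv_le_one m
  rw [expectedEmptyBins_eq, div_eq_mul_inv, div_eq_mul_inv, ← inv_pow, mul_assoc]
  gcongr
  exact exp_neg_mul_one_sub_le_one_sub_pow abs_inv_le n

lemma mul_rpow_div_log_mul_one_sub_le_expectedEmptyBins {β : ℝ} {n m : ℕ} (hn : 0 < n)
    (hm : (m : ℝ) = β * n / Real.log n) :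
    β * (n : ℝ) ^ (1 - 1 / β) / Real.log n * (1 - (Real.log n / β) ^ 2 / n)
      ≤ expectedEmptyBins n m := by
  have hn' : (0 : ℝ) < n := by exact_mod_cast hn
  have load_eq : (n / m : ℝ) = Real.log n / β := by
    rw [hm, div_div_eq_mul_div, mul_comm β, mul_div_mul_left _ _ hn'.ne']
  have main_term_eq : m * Real.exp (-(n / m : ℝ)) = β * (n : ℝ) ^ (1 - 1 / β) / Real.log n := by
    rw [load_eq, hm, rpow_one_sub_one_div_eq_mul_exp hn']
    ring
  have error_eq : (n / m ^ 2 : ℝ) = (Real.log n / β) ^ 2 / n := by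
    rw [← load_eq, div_pow, div_right_comm, sq (n : ℝ), mul_self_div_self]
  rw [← main_term_eq, ← error_eq]
  exact mul_exp_mul_one_sub_le_expectedEmptyBins n m

theorem stmt_1_general {β c : ℝ} (hβ : 0 < β) (hc : c < 1) :
    ∀ᶠ n : ℕ in Filter.atTop, ∀ m : ℕ, (m : ℝ) = β * n / Real.log n →
      c * (β * (n : ℝ) ^ (1 - 1 / β) / Real.log n) ≤ expectedEmptyBins n m := by
  have error_lt : ∀ᶠ n : ℕ in Filter.atTop, (Real.log n / β) ^ 2 / n < 1 - c :=
    ((tendsto_log_div_sq_div_self_atTop β).comp tendsto_natCast_atTop_atTop).eventually_lt_const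
      (sub_pos.2 hc)
  filter_upwards [error_lt, Filter.eventually_gt_atTop 0] with n herror hn m hm
  calc c * (β * (n : ℝ) ^ (1 - 1 / β) / Real.log n)
      = β * (n : ℝ) ^ (1 - 1 / β) / Real.log n * c := mul_comm _ _
    _ ≤ β * (n : ℝ) ^ (1 - 1 / β) / Real.log n * (1 - (Real.log n / β) ^ 2 / n) := by
        gcongr
        linarith
    _ ≤ expectedEmptyBins n m := mul_rpow_div_log_mul_one_sub_le_expectedEmptyBins hn hm

/-- For `β ≥ 4`, for all sufficiently large `n`, throwing `n` balls uniformly and independently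
into `m = β n / log n` bins, the expected number of empty bins is at least
`β n^{1 - 1/β} / (2 log n)`. Expectation is the average over all `m^n` equally likely outcomes. -/
theorem stmt_1 (β : ℝ) (hβ : 4 ≤ β) :
    ∃ n₀ : ℕ, ∀ n : ℕ, n₀ ≤ n → ∀ m : ℕ, 0 < m →
      (m : ℝ) = β * n / Real.log n →
      β * (n : ℝ) ^ ((1 : ℝ) - 1 / β) / (2 * Real.log n)
        ≤ (∑ ω : Fin n → Fin m, (emptyBins n m ω : ℝ)) / (m : ℝ) ^ n := by
  obtain ⟨n₀, h⟩ := Filter.eventually_atTop.1 (stmt_1_general (by linarith : 0 < β) one_half_lt_one)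
  exact ⟨n₀, fun n hn m _ hm => le_of_eq_of_le (by ring) (h n hn m hm)⟩
end

section
/- Let β ≥ 4 be a real number and c ≥ 8 a real number. There exists n₀ (depending on β and c) such that for every integer n ≥ n₀ and every positive integer m with m = βn/log n, if n balls are thrown independently and uniformly at random into m bins and X₁ denotes the number of bins containing exactly one ball, then Pr[X₁ ≥ n^{1−1/β}/(4 log n)] ≥ 1 − n^{−c}. -/
open scoped Classical

/-- The number of bins containing exactly one ball, when the `n` balls land according to `ω`. -/
def singletonBins (n m : ℕ) (ω : Fin n → Fin m) : ℕ :=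
  (Finset.univ.filter fun j : Fin m =>
    (Finset.univ.filter fun i : Fin n => ω i = j).card = 1).card

/-!
The mean of `X₁` is `n (1 - 1/m)^(n-1)`, and since `n ≤ m (m - 1)` this is at least
`e⁻¹ n exp (-n/m) = e⁻¹ n^(1-1/β)`. Moving a single ball changes `X₁` by at most `2`, so by
McDiarmid's inequality `X₁` falls `t` below its mean with probability at most `exp (-t²/(2n))`.
For `t = n^(1-1/β)/8` the exponent is of order `n^(1-2/β)`, which dominates every multiple of
`log n` as soon as `β > 2`.

McDiarmid's inequality follows by induction on the number of coordinates: the conditional mean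
given the first coordinate oscillates by at most `c 0`, so it is sub-Gaussian by Hoeffding's lemma,
and sub-Gaussian parameters add over a product measure.
-/

open MeasureTheory ProbabilityTheory Filter
open scoped NNReal BigOperators

section SubGaussian

variable {α β : Type*} [MeasurableSpace α] [MeasurableSpace β] {μ : Measure α} {ν : Measure β}

lemma hasSubgaussianMGF_sub_integral_of_abs_sub_le [IsProbabilityMeasure μ] {X : α → ℝ}
    (hX : AEMeasurable X μ) {c : ℝ≥0} (hc : ∀ a b, |X a - X b| ≤ c) :
    HasSubgaussianMGF (fun a ↦ X a - ∫ b, X b ∂μ) ((c / 2) ^ 2) μ := by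
  have : Nonempty α := nonempty_of_isProbabilityMeasure μ
  have hsub (a b : α) : X a - c ≤ X b := by linarith [le_abs_self (X a - X b), hc a b]
  have hbdd : BddBelow (Set.range X) :=
    ⟨X (Classical.arbitrary α) - c, Set.forall_mem_range.2 (hsub _)⟩
  have hIcc (a : α) : X a ∈ Set.Icc (⨅ b, X b) ((⨅ b, X b) + c) :=
    ⟨ciInf_le hbdd a, sub_le_iff_le_add.1 (le_ciInf (hsub a))⟩
  simpa using hasSubgaussianMGF_of_mem_Icc hX (ae_of_all μ hIcc)

lemma integrable_exp_mul_add_prod [SFinite ν] {X : α → ℝ} {Y : α × β → ℝ} {c₁ c₂ : ℝ≥0}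
    (hY : AEStronglyMeasurable Y (μ.prod ν)) (hX : HasSubgaussianMGF X c₁ μ)
    (hYa : ∀ᵐ a ∂μ, HasSubgaussianMGF (fun b ↦ Y (a, b)) c₂ ν) (t : ℝ) :
    Integrable (fun p ↦ Real.exp (t * (X p.1 + Y p))) (μ.prod ν) := by
  have hmeas : AEStronglyMeasurable (fun p ↦ Real.exp (t * (X p.1 + Y p))) (μ.prod ν) :=
    Real.continuous_exp.comp_aestronglyMeasurable
      ((hX.aestronglyMeasurable.comp_fst.add hY).const_mul t)
  simp only [integrable_prod_iff hmeas, Real.norm_eq_abs, Real.abs_exp]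
  simp only [mul_add, Real.exp_add, integral_const_mul]
  refine ⟨hYa.mono fun a ha ↦ (ha.integrable_exp_mul t).const_mul _, ?_⟩
  refine (hX.integrable_exp_mul t).mul_bdd (c := Real.exp (c₂ * t ^ 2 / 2)) ?_ ?_
  · exact (Real.continuous_exp.comp_aestronglyMeasurable (hY.const_mul t)).integral_prod_right'
  · filter_upwards [hYa] with a ha
    rw [Real.norm_of_nonneg (integral_nonneg fun b ↦ (Real.exp_pos _).le)]
    exact ha.mgf_le t

lemma hasSubgaussianMGF_add_prod [SFinite μ] [SFinite ν] {X : α → ℝ} {Y : α × β → ℝ}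
    {c₁ c₂ : ℝ≥0} (hY : AEStronglyMeasurable Y (μ.prod ν))
    (hX : HasSubgaussianMGF X c₁ μ) (hYa : ∀ᵐ a ∂μ, HasSubgaussianMGF (fun b ↦ Y (a, b)) c₂ ν) :
    HasSubgaussianMGF (fun p ↦ X p.1 + Y p) (c₁ + c₂) (μ.prod ν) where
  integrable_exp_mul := integrable_exp_mul_add_prod hY hX hYa
  mgf_le t := by
    have hint := integrable_exp_mul_add_prod hY hX hYa t
    calc mgf (fun p ↦ X p.1 + Y p) (μ.prod ν) t
        = ∫ a, Real.exp (t * X a) * mgf (fun b ↦ Y (a, b)) ν t ∂μ := by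
          rw [mgf, integral_prod _ hint]
          simp only [mul_add, Real.exp_add, integral_const_mul, mgf]
      _ ≤ ∫ a, Real.exp (t * X a) * Real.exp (c₂ * t ^ 2 / 2) ∂μ := by
          refine integral_mono_of_nonneg (ae_of_all _ fun a ↦ mul_nonneg (Real.exp_nonneg _)
            mgf_nonneg) ((hX.integrable_exp_mul t).mul_const _) ?_
          filter_upwards [hYa] with a ha
          gcongr
          exact ha.mgf_le t
      _ ≤ Real.exp (c₁ * t ^ 2 / 2) * Real.exp (c₂ * t ^ 2 / 2) := by
          rw [integral_mul_const]
          gcongr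
          exact hX.mgf_le t
      _ = Real.exp (↑(c₁ + c₂) * t ^ 2 / 2) := by
          rw [← Real.exp_add, NNReal.coe_add]
          ring_nf

/-- Decompose `F - 𝔼 F` as `(F - 𝔼[F | fst]) + (𝔼[F | fst] - 𝔼 F)`. -/
lemma hasSubgaussianMGF_sub_integral_prod [IsProbabilityMeasure μ] [IsProbabilityMeasure ν]
    {F : α × β → ℝ} {c₁ c₂ : ℝ≥0} (hF : StronglyMeasurable F)
    (hfst : HasSubgaussianMGF (fun a ↦ ∫ b, F (a, b) ∂ν - ∫ a', ∫ b, F (a', b) ∂ν ∂μ) c₁ μ)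
    (hsnd : ∀ a, HasSubgaussianMGF (fun b ↦ F (a, b) - ∫ b', F (a, b') ∂ν) c₂ ν) :
    HasSubgaussianMGF (fun p ↦ F p - ∫ q, F q ∂μ.prod ν) (c₁ + c₂) (μ.prod ν) := by
  have hmeas : StronglyMeasurable fun p : α × β ↦ F p - ∫ b, F (p.1, b) ∂ν :=
    hF.sub (hF.integral_prod_right'.comp_measurable measurable_fst)
  have hsum := hasSubgaussianMGF_add_prod hmeas.aestronglyMeasurable hfst (ae_of_all _ hsnd)
  simp only [sub_add_sub_cancel'] at hsum
  have hint : Integrable F (μ.prod ν) := (integrable_add_const_iff (c := -_)).1 hsum.integrable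
  rwa [← integral_prod _ hint] at hsum

end SubGaussian

/-- `HasBoundedDifferences f c` is the hypothesis of McDiarmid's bounded differences inequality:
changing only the `i`-th coordinate of the argument changes `f` by at most `c i`. -/
def HasBoundedDifferences {ι : Type*} [DecidableEq ι] {α : ι → Type*} (f : (∀ i, α i) → ℝ)
    (c : ι → ℝ≥0) : Prop :=
  ∀ ω i a, |f (Function.update ω i a) - f ω| ≤ c i

namespace HasBoundedDifferences

lemma comp_cons {n : ℕ} {α : Fin (n + 1) → Type*} {f : (∀ i, α i) → ℝ} {c : Fin (n + 1) → ℝ≥0}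
    (h : HasBoundedDifferences f c) (a : α 0) :
    HasBoundedDifferences (fun η : ∀ i : Fin n, α i.succ ↦ f (Fin.cons a η))
      fun i ↦ c i.succ := by
  intro η i b
  simpa only [Fin.cons_update] using h (Fin.cons a η) i.succ b

lemma abs_integral_cons_sub_integral_cons_le {n : ℕ} {α : Fin (n + 1) → Type*}
    {f : (∀ i, α i) → ℝ} {c : Fin (n + 1) → ℝ≥0} (h : HasBoundedDifferences f c)
    [MeasurableSpace (∀ i : Fin n, α i.succ)]
    {ν : Measure (∀ i : Fin n, α i.succ)} [IsProbabilityMeasure ν]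
    (hint : ∀ a, Integrable (fun η ↦ f (Fin.cons a η)) ν) (a b : α 0) :
    |∫ η, f (Fin.cons a η) ∂ν - ∫ η, f (Fin.cons b η) ∂ν| ≤ c 0 := by
  rw [← integral_sub (hint a) (hint b), ← Real.norm_eq_abs]
  refine (norm_integral_le_of_norm_le_const (C := c 0) (ae_of_all _ fun η ↦ ?_)).trans (by simp)
  simpa only [Fin.update_cons_zero, Real.norm_eq_abs] using h (Fin.cons b η) 0 a

theorem hasSubgaussianMGF_sub_integral {n : ℕ} {α : Fin n → Type*} [∀ i, MeasurableSpace (α i)]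
    (μ : ∀ i, Measure (α i)) [∀ i, IsProbabilityMeasure (μ i)] {f : (∀ i, α i) → ℝ}
    {c : Fin n → ℝ≥0} (h : HasBoundedDifferences f c) (hf : Measurable f) :
    HasSubgaussianMGF (fun ω ↦ f ω - ∫ ω', f ω' ∂Measure.pi μ) (∑ i, (c i / 2) ^ 2)
      (Measure.pi μ) := by
  induction n with
  | zero =>
    have hconst (ω) : f ω = f default := congrArg f (Subsingleton.elim _ _)
    simp [hconst]
  | succ n ih =>
    let e : (∀ i, α i) ≃ᵐ α 0 × (∀ i : Fin n, α i.succ) := MeasurableEquiv.piFinSuccAbove α 0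
    let F : α 0 × (∀ i : Fin n, α i.succ) → ℝ := fun p ↦ f (Fin.cons p.1 p.2)
    let ν : Measure (∀ i : Fin n, α i.succ) := Measure.pi fun i ↦ μ i.succ
    have he : MeasurePreserving e (Measure.pi μ) ((μ 0).prod ν) :=
      measurePreserving_piFinSuccAbove μ 0
    have hFe (ω) : F (e ω) = f ω := congrArg f (Fin.cons_self_tail ω)
    have hF : Measurable F :=
      e.measurable_comp_iff.1 (by simpa only [Function.comp_def, hFe] using hf)
    have hsnd (a : α 0) := ih (fun i ↦ μ i.succ) (h.comp_cons a) (hF.comp measurable_prodMk_left)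
    have hint (a : α 0) : Integrable (fun η ↦ f (Fin.cons a η)) ν :=
      (integrable_add_const_iff (c := -_)).1 (hsnd a).integrable
    have hfst := hasSubgaussianMGF_sub_integral_of_abs_sub_le (μ := μ 0)
      hF.stronglyMeasurable.integral_prod_right'.measurable.aemeasurable
      (h.abs_integral_cons_sub_integral_cons_le hint)
    have hprod := hasSubgaussianMGF_sub_integral_prod hF.stronglyMeasurable hfst hsnd
    rw [← he.map_eq] at hprod
    have hcomp := hprod.of_map e.measurable.aemeasurable
    rw [he.map_eq, ← he.integral_comp' F] at hcomp
    simpa only [Function.comp_def, hFe, Fin.sum_univ_succ] using hcomp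

theorem measureReal_le_integral_sub_le {n : ℕ} {α : Fin n → Type*} [∀ i, MeasurableSpace (α i)]
    (μ : ∀ i, Measure (α i)) [∀ i, IsProbabilityMeasure (μ i)] {f : (∀ i, α i) → ℝ}
    {c : Fin n → ℝ≥0} (h : HasBoundedDifferences f c) (hf : Measurable f) {t : ℝ} (ht : 0 ≤ t) :
    (Measure.pi μ).real {ω | f ω ≤ ∫ ω', f ω' ∂Measure.pi μ - t} ≤
      Real.exp (-2 * t ^ 2 / ∑ i, (c i : ℝ) ^ 2) := by
  convert (h.hasSubgaussianMGF_sub_integral μ hf).neg.measure_ge_le ht using 2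
  · ext ω
    simp only [Pi.neg_apply, Set.mem_ofPred_eq, neg_sub, le_sub_comm]
  · push_cast
    simp only [div_pow, ← Finset.sum_div]
    field_simp

end HasBoundedDifferences

section Uniform

variable {Ω : Type*} [Fintype Ω] [MeasurableSpace Ω] [MeasurableSingletonClass Ω]

lemma measureReal_uniformOn_univ_coe_finset (s : Finset Ω) :
    (uniformOn (Set.univ : Set Ω)).real s = s.card / Fintype.card Ω := by
  simp [measureReal_def, uniformOn_univ]

lemma integral_uniformOn_univ_eq_expect (f : Ω → ℝ) :
    ∫ ω, f ω ∂uniformOn (Set.univ : Set Ω) = 𝔼 ω, f ω := by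
  simp [uniformOn, ProbabilityTheory.cond, Fintype.expect_eq_sum_div_card, div_eq_inv_mul]

end Uniform

theorem HasBoundedDifferences.one_sub_exp_le_card_div {n : ℕ} {κ : Type*} [Fintype κ]
    [Nonempty κ] {f : (Fin n → κ) → ℝ} {c : Fin n → ℝ≥0} (h : HasBoundedDifferences f c)
    {t τ : ℝ} (ht : 0 ≤ t) (hτ : τ + t ≤ 𝔼 ω, f ω) :
    1 - Real.exp (-2 * t ^ 2 / ∑ i, (c i : ℝ) ^ 2) ≤
      ((Finset.univ.filter fun ω ↦ τ ≤ f ω).card : ℝ) / (Fintype.card κ : ℝ) ^ n := by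
  let _ : MeasurableSpace κ := ⊤
  let P : Measure (Fin n → κ) := uniformOn Set.univ
  have hP : Measure.pi (fun _ ↦ uniformOn (Set.univ : Set κ)) = P := by
    rw [← uniformOn_pi, Set.pi_univ]
  have hlower := h.measureReal_le_integral_sub_le (fun _ ↦ uniformOn (Set.univ : Set κ))
    (measurable_of_finite f) ht
  rw [hP, integral_uniformOn_univ_eq_expect] at hlower
  have hsub : {ω | f ω ≤ 𝔼 ω', f ω' - t}ᶜ ⊆ ↑(Finset.univ.filter fun ω ↦ τ ≤ f ω) := by
    intro ω hω
    simp only [Set.mem_compl_iff, Set.mem_ofPred_eq, not_le] at hω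
    simpa using (le_sub_iff_add_le.2 hτ).trans hω.le
  have hupper : 1 - P.real {ω | f ω ≤ 𝔼 ω', f ω' - t} ≤
      ((Finset.univ.filter fun ω ↦ τ ≤ f ω).card : ℝ) / (Fintype.card κ : ℝ) ^ n := by
    rw [← probReal_compl_eq_one_sub (Set.toFinite _).measurableSet]
    refine (measureReal_mono hsub).trans_eq ?_
    rw [measureReal_uniformOn_univ_coe_finset, Fintype.card_fun, Fintype.card_fin, Nat.cast_pow]
  linarith

section Occupancy

variable {n m : ℕ}

lemma singletonBins_le_singletonBins_update_add_two (ω : Fin n → Fin m) (i : Fin n) (a : Fin m) :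
    singletonBins n m ω ≤ singletonBins n m (Function.update ω i a) + 2 := by
  have hfiber (j : Fin m) (hj : j ≠ ω i ∧ j ≠ a) :
      (Finset.univ.filter fun k ↦ Function.update ω i a k = j) =
        Finset.univ.filter fun k ↦ ω k = j := by
    ext k
    rcases eq_or_ne k i with rfl | hk
    · simp [hj.1.symm, hj.2.symm]
    · simp [hk]
  refine (Finset.card_le_card fun j hj ↦ ?_).trans
    ((Finset.card_union_le _ {ω i, a}).trans (Nat.add_le_add_left Finset.card_le_two _))
  by_cases hj' : j ≠ ω i ∧ j ≠ a
  · rw [Finset.mem_filter_univ, ← hfiber j hj'] at hj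
    exact Finset.mem_union_left _ ((Finset.mem_filter_univ j).2 hj)
  · grind

lemma hasBoundedDifferences_singletonBins :
    HasBoundedDifferences (fun ω : Fin n → Fin m ↦ (singletonBins n m ω : ℝ)) fun _ ↦ 2 := by
  intro ω i a
  have hle := singletonBins_le_singletonBins_update_add_two ω i a
  have hge := singletonBins_le_singletonBins_update_add_two (Function.update ω i a) i (ω i)
  rw [Function.update_idem, Function.update_eq_self] at hge
  beta_reduce
  rw [NNReal.coe_ofNat, abs_sub_le_iff, sub_le_iff_le_add', sub_le_iff_le_add']
  exact ⟨mod_cast hge, mod_cast hle⟩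

lemma card_filter_fiber_eq_singleton (i : Fin n) (j : Fin m) :
    (Finset.univ.filter fun ω : Fin n → Fin m ↦
      (Finset.univ.filter fun k ↦ ω k = j) = {i}).card = (m - 1) ^ (n - 1) := by
  have hpi : (Finset.univ.filter fun ω : Fin n → Fin m ↦
      (Finset.univ.filter fun k ↦ ω k = j) = {i}) =
        Fintype.piFinset (Function.update (fun _ ↦ {j}ᶜ) i {j}) := by
    ext ω
    simp only [Finset.mem_filter, Finset.mem_univ, true_and, Fintype.mem_piFinset,
      Finset.ext_iff, Finset.mem_singleton]
    refine forall_congr' fun k ↦ ?_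
    rcases eq_or_ne k i with rfl | hk
    · simp
    · simp [hk]
  rw [hpi, Fintype.card_piFinset, ← Finset.mul_prod_erase _ _ (Finset.mem_univ i)]
  rw [Finset.prod_congr rfl (g := fun _ ↦ m - 1)]
  · simp
  · intro k hk
    simp [Finset.ne_of_mem_erase hk, Finset.card_compl]

lemma singletonBins_eq_sum_card (ω : Fin n → Fin m) :
    singletonBins n m ω = ∑ j : Fin m,
      (Finset.univ.filter fun i : Fin n ↦ (Finset.univ.filter fun k ↦ ω k = j) = {i}).card := by
  rw [singletonBins, Finset.card_filter]
  refine Finset.sum_congr rfl fun j _ ↦ ?_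
  split_ifs with hj
  · obtain ⟨i, hi⟩ := Finset.card_eq_one.1 hj
    simp [hi, Finset.filter_eq]
  · rw [eq_comm, Finset.card_eq_zero, Finset.filter_eq_empty_iff]
    rintro i - hi
    exact hj (hi ▸ Finset.card_singleton i)

lemma sum_singletonBins :
    ∑ ω : Fin n → Fin m, singletonBins n m ω = m * (n * (m - 1) ^ (n - 1)) := by
  simp only [singletonBins_eq_sum_card, Finset.card_filter]
  rw [Finset.sum_comm]
  have hbin (j : Fin m) : (∑ ω : Fin n → Fin m, ∑ i : Fin n,
      if (Finset.univ.filter fun k ↦ ω k = j) = {i} then 1 else 0) = n * (m - 1) ^ (n - 1) := by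
    rw [Finset.sum_comm]
    simp only [← Finset.card_filter, card_filter_fiber_eq_singleton, Finset.sum_const,
      Finset.card_univ, Fintype.card_fin, smul_eq_mul]
  simp only [hbin, Finset.sum_const, Finset.card_univ, Fintype.card_fin, smul_eq_mul]

lemma expect_singletonBins (hm : m ≠ 0) :
    𝔼 ω : Fin n → Fin m, (singletonBins n m ω : ℝ) = n * (1 - 1 / m : ℝ) ^ (n - 1) := by
  rw [Fintype.expect_eq_sum_div_card, ← Nat.cast_sum, sum_singletonBins]
  cases n with
  | zero => simp
  | succ n =>
    push_cast [Nat.one_le_iff_ne_zero.2 hm, Fintype.card_fun, Fintype.card_fin,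
      Nat.add_sub_cancel]
    rw [one_sub_div (by positivity), div_pow]
    field_simp
    ring

end Occupancy

section Asymptotics

lemma exp_neg_inv_sub_one_le_one_sub_inv {x : ℝ} (hx : 1 < x) :
    Real.exp (-(x - 1)⁻¹) ≤ 1 - 1 / x := by
  have hx' : 0 < x - 1 := sub_pos.2 hx
  have hpos : 0 < 1 - 1 / x := by rw [one_sub_div (by positivity)]; positivity
  rw [← Real.le_log_iff_exp_le hpos]
  convert Real.one_sub_inv_le_log_of_pos hpos using 1
  field

lemma exp_neg_div_sub_one_le_one_sub_inv_pow {n : ℕ} {x : ℝ} (hx : 1 < x)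
    (hnx : n ≤ x * (x - 1)) : Real.exp (-(n / x) - 1) ≤ (1 - 1 / x) ^ (n - 1) := by
  have hx' : 0 < x - 1 := sub_pos.2 hx
  have hdiv : n * (x - 1)⁻¹ ≤ n / x + 1 := by
    rw [← sub_le_iff_le_add']
    calc n * (x - 1)⁻¹ - n / x = n / (x * (x - 1)) := by field
      _ ≤ 1 := div_le_one_of_le₀ hnx (by positivity)
  calc Real.exp (-(n / x) - 1) ≤ Real.exp (n * -(x - 1)⁻¹) := by gcongr; linarith
    _ = Real.exp (-(x - 1)⁻¹) ^ n := Real.exp_nat_mul _ _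
    _ ≤ (1 - 1 / x) ^ n := by gcongr; exact exp_neg_inv_sub_one_le_one_sub_inv hx
    _ ≤ (1 - 1 / x) ^ (n - 1) := pow_le_pow_of_le_one
      ((Real.exp_nonneg _).trans (exp_neg_inv_sub_one_le_one_sub_inv hx))
      (sub_le_self _ (by positivity)) (Nat.sub_le _ _)

lemma mul_exp_neg_div_eq_rpow {x : ℝ} (hx : 0 < x) (β : ℝ) :
    x * Real.exp (-(x / (β * x / Real.log x))) = x ^ (1 - 1 / β) := by
  have hdiv : x / (β * x / Real.log x) = Real.log x * (1 / β) := by field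
  rw [hdiv, Real.exp_neg, Real.rpow_sub hx, Real.rpow_one, Real.rpow_def_of_pos hx]
  rfl

lemma eventually_mul_log_le_rpow (C : ℝ) {r : ℝ} (hr : 0 < r) :
    ∀ᶠ x : ℝ in atTop, C * Real.log x ≤ x ^ r := by
  filter_upwards [((isLittleO_log_rpow_atTop hr).const_mul_left C).bound one_pos,
    eventually_ge_atTop 0] with x hx hx0
  rw [one_mul, Real.norm_of_nonneg (Real.rpow_nonneg hx0 r)] at hx
  exact (Real.le_norm_self _).trans hx

lemma eventually_sqrt_add_one_le_mul_div_log {β : ℝ} (hβ : 0 < β) :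
    ∀ᶠ x : ℝ in atTop, √x + 1 ≤ β * x / Real.log x := by
  filter_upwards [eventually_mul_log_le_rpow (2 / β) one_half_pos, eventually_gt_atTop 1]
    with x hlog hx
  rw [← Real.sqrt_eq_rpow, div_mul_eq_mul_div, div_le_iff₀ hβ] at hlog
  have hsqrt : 1 ≤ √x := Real.one_le_sqrt.2 hx.le
  rw [le_div_iff₀ (Real.log_pos hx)]
  calc (√x + 1) * Real.log x ≤ (√x + √x) * Real.log x := by gcongr; exact Real.log_nonneg hx.le
    _ = √x * (2 * Real.log x) := by ring
    _ ≤ √x * (√x * β) := by gcongr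
    _ = β * x := by rw [← mul_assoc, Real.mul_self_sqrt (by positivity), mul_comm]

lemma eventually_exp_neg_one_mul_rpow_le_expect_singletonBins {β : ℝ} (hβ : 0 < β) :
    ∀ᶠ n : ℕ in atTop, ∀ m : ℕ, (m : ℝ) = β * n / Real.log n →
      Real.exp (-1) * (n : ℝ) ^ (1 - 1 / β) ≤
        𝔼 ω : Fin n → Fin m, (singletonBins n m ω : ℝ) := by
  filter_upwards [tendsto_natCast_atTop_atTop.eventually
    (eventually_sqrt_add_one_le_mul_div_log hβ), eventually_gt_atTop 0] with n hsqrt hn m hm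
  rw [← hm] at hsqrt
  have hsqrt_pos : 0 < √(n : ℝ) := by positivity
  have hnm : (n : ℝ) ≤ m * (m - 1) := by
    calc (n : ℝ) = √n * √n := (Real.mul_self_sqrt n.cast_nonneg).symm
      _ ≤ m * (m - 1) := by gcongr <;> linarith
  have hm0 : m ≠ 0 := by rintro rfl; simp at hsqrt; linarith
  rw [expect_singletonBins hm0, ← mul_exp_neg_div_eq_rpow (Nat.cast_pos.2 hn), ← hm,
    mul_left_comm, ← Real.exp_add, neg_add_eq_sub, sub_eq_neg_add, add_comm]
  gcongr
  exact exp_neg_div_sub_one_le_one_sub_inv_pow (by linarith) hnm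

lemma eventually_exp_neg_sq_rpow_div_le_rpow_neg {β : ℝ} (hβ : 2 < β) {k : ℝ} (hk : 0 < k)
    (c : ℝ) :
    ∀ᶠ x : ℝ in atTop, Real.exp (-(k * (x ^ (1 - 1 / β)) ^ 2 / x)) ≤ x ^ (-c) := by
  have hr : 0 < 1 - 2 / β := by rw [sub_pos, div_lt_one] <;> linarith
  filter_upwards [eventually_mul_log_le_rpow (c / k) hr, eventually_gt_atTop 0] with x hlog hx
  have hpow : (x ^ (1 - 1 / β)) ^ 2 / x = x ^ (1 - 2 / β) := by
    rw [← Real.rpow_mul_natCast hx.le, ← Real.rpow_sub_one hx.ne']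
    congr 1
    push_cast
    ring
  rw [mul_div_assoc, hpow, Real.rpow_def_of_pos hx (-c), Real.exp_le_exp, mul_neg,
    neg_le_neg_iff, mul_comm]
  rwa [div_mul_eq_mul_div, div_le_iff₀' hk] at hlog

end Asymptotics

theorem stmt_5_general (β c : ℝ) (hβ : 2 < β) :
    ∃ n₀ : ℕ, ∀ n : ℕ, n₀ ≤ n → ∀ m : ℕ, 0 < m →
      (m : ℝ) = β * n / Real.log n →
      1 - (n : ℝ) ^ (-c) ≤
        ((Finset.univ.filter fun ω : Fin n → Fin m =>
              (n : ℝ) ^ ((1 : ℝ) - 1 / β) / (4 * Real.log n)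
                ≤ (singletonBins n m ω : ℝ)).card : ℝ)
          / (m : ℝ) ^ n := by
  have hnat := tendsto_natCast_atTop_atTop (R := ℝ)
  refine eventually_atTop.1 ?_
  filter_upwards [eventually_exp_neg_one_mul_rpow_le_expect_singletonBins (two_pos.trans hβ),
    hnat.eventually (eventually_exp_neg_sq_rpow_div_le_rpow_neg hβ (k := 1 / 128) (by norm_num) c),
    (Real.tendsto_log_atTop.comp hnat).eventually_ge_atTop 2] with n hmean htail hlog m hm0 hm
  have := Fin.pos_iff_nonempty.1 hm0
  set P : ℝ := (n : ℝ) ^ (1 - 1 / β)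
  have hgap : P / (4 * Real.log n) + P / 8 ≤ 𝔼 ω : Fin n → Fin m, (singletonBins n m ω : ℝ) := by
    refine le_trans ?_ (hmean m hm)
    calc P / (4 * Real.log n) + P / 8 ≤ P / (4 * 2) + P / 8 := by
          gcongr
          exact hlog
      _ = 1 / 4 * P := by ring
      _ ≤ Real.exp (-1) * P := by gcongr; linarith [Real.exp_neg_one_gt_d9]
  have hconc := hasBoundedDifferences_singletonBins.one_sub_exp_le_card_div
    (t := P / 8) (by positivity) hgap
  simp only [Fintype.card_fin, NNReal.coe_ofNat, Finset.sum_const, Finset.card_univ,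
    nsmul_eq_mul] at hconc
  have hexp : -2 * (P / 8) ^ 2 / (n * 2 ^ 2) = -(1 / 128 * P ^ 2 / n) := by ring
  rw [hexp] at hconc
  exact (sub_le_sub_left htail 1).trans hconc

/-- For `β ≥ 4` and `c ≥ 8`, for all sufficiently large `n`, throwing `n` balls uniformly and
independently into `m = β n / log n` bins, the number `X₁` of bins with exactly one ball
satisfies `X₁ ≥ n^{1-1/β}/(4 log n)` with probability at least `1 - n^{-c}`; probability is
the fraction of the `m^n` equally likely outcomes for which the event holds. -/
theorem stmt_5 (β c : ℝ) (hβ : 4 ≤ β) (hc : 8 ≤ c) :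
    ∃ n₀ : ℕ, ∀ n : ℕ, n₀ ≤ n → ∀ m : ℕ, 0 < m →
      (m : ℝ) = β * n / Real.log n →
      1 - (n : ℝ) ^ (-c) ≤
        ((Finset.univ.filter fun ω : Fin n → Fin m =>
              (n : ℝ) ^ ((1 : ℝ) - 1 / β) / (4 * Real.log n)
                ≤ (singletonBins n m ω : ℝ)).card : ℝ)
          / (m : ℝ) ^ n :=
  stmt_5_general β c (by linarith)
end

section
/- Let C ⊆ ℝ² be an axis-aligned square of side length ℓ > 0, and let C′ be the axis-aligned square with the same center as C and side length δ = ℓ/(1 + 2√2). Then for every p ∈ C′ and every x ∈ C′, dist(x,p) ≤ dist(x, ∂C); that is, C′ ⊆ D_p = {x ∈ C : dist(x,p) ≤ dist(x, ∂C)} for every p ∈ C′. -/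
/-- Euclidean distance on `ℝ × ℝ`. -/
noncomputable def distE (x y : ℝ × ℝ) : ℝ :=
  Real.sqrt ((x.1 - y.1) ^ 2 + (x.2 - y.2) ^ 2)

/-- The axis-aligned square with bottom-left corner `a` and side length `ℓ`. -/
def square (a : ℝ × ℝ) (ℓ : ℝ) : Set (ℝ × ℝ) :=
  Set.Icc a.1 (a.1 + ℓ) ×ˢ Set.Icc a.2 (a.2 + ℓ)

/-- The Euclidean distance from a point to a set (used for the boundary `∂C`). -/
noncomputable def distBd (x : ℝ × ℝ) (S : Set (ℝ × ℝ)) : ℝ :=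
  sInf (distE x '' S)

/-- `D_p`: the set of points of the square that are at least as close to `p` as to the
boundary of the square. -/
noncomputable def Dcell (a : ℝ × ℝ) (ℓ : ℝ) (p : ℝ × ℝ) : Set (ℝ × ℝ) :=
  {x ∈ square a ℓ | distE x p ≤ distBd x (frontier (square a ℓ))}

/-!
The distance `dist` of `ℝ × ℝ` is the sup distance, for which `C` and `C'` are concentric closed
balls of radii `ℓ / 2` and `δ / 2`. The triangle inequality then says that two points of `C'` are
at sup distance at most `δ`, and that a point of `C'` is at sup distance at least `(ℓ - δ) / 2`
from `∂C`. Passing to the Euclidean distance costs a factor `√2` in the first bound and nothing in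
the second, and `√2 * δ = (ℓ - δ) / 2` is the equation that determines `δ`.
-/

open Metric

theorem dist_le_distE (x y : ℝ × ℝ) : dist x y ≤ distE x y :=
  max_le (Real.abs_le_sqrt (le_add_of_nonneg_right (sq_nonneg _)))
    (Real.abs_le_sqrt (le_add_of_nonneg_left (sq_nonneg _)))

theorem distE_le_sqrt_two_mul_dist (x y : ℝ × ℝ) : distE x y ≤ √2 * dist x y := by
  have hfst : (x.1 - y.1) ^ 2 ≤ dist x y ^ 2 :=
    sq_le_sq.2 <| (le_max_left _ _).trans (le_abs_self _)
  have hsnd : (x.2 - y.2) ^ 2 ≤ dist x y ^ 2 :=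
    sq_le_sq.2 <| (le_max_right _ _).trans (le_abs_self _)
  calc distE x y ≤ √(2 * dist x y ^ 2) := Real.sqrt_le_sqrt (by linarith)
    _ = √2 * dist x y := by rw [Real.sqrt_mul zero_le_two, Real.sqrt_sq dist_nonneg]

theorem square_eq_closedBall (a : ℝ × ℝ) (ℓ : ℝ) :
    square a ℓ = closedBall (a.1 + ℓ / 2, a.2 + ℓ / 2) (ℓ / 2) := by
  simp only [square, ← closedBall_prod_same, Real.closedBall_eq_Icc, add_sub_cancel_right,
    add_assoc, add_halves]

theorem concentric_square_eq_closedBall (a : ℝ × ℝ) (ℓ δ : ℝ) :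
    square (a.1 + (ℓ - δ) / 2, a.2 + (ℓ - δ) / 2) δ =
      closedBall (a.1 + ℓ / 2, a.2 + ℓ / 2) (δ / 2) := by
  rw [square_eq_closedBall]
  congr 2 <;> ring

theorem sub_le_distBd_frontier_closedBall {c x : ℝ × ℝ} {r R : ℝ} (hR : 0 ≤ R)
    (hx : x ∈ closedBall c r) : R - r ≤ distBd x (frontier (closedBall c R)) := by
  rw [frontier_closedBall']
  -- `le_csInf` needs a point of the sphere: the infimum over the empty set is `0`.
  refine le_csInf ((NormedSpace.sphere_nonempty.2 hR).image _) ?_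
  rintro _ ⟨y, hy, rfl⟩
  calc R - r ≤ dist y c - dist x c := sub_le_sub (mem_sphere.1 hy).ge (mem_closedBall.1 hx)
    _ ≤ dist x y := by linarith [dist_triangle_left y c x]
    _ ≤ distE x y := dist_le_distE x y

theorem distE_le_of_mem_closedBall {c x p : ℝ × ℝ} {r : ℝ} (hx : x ∈ closedBall c r)
    (hp : p ∈ closedBall c r) : distE x p ≤ √2 * (2 * r) :=
  calc distE x p ≤ √2 * dist x p := distE_le_sqrt_two_mul_dist x p
    _ ≤ √2 * (r + r) := by
      gcongr
      exact (dist_triangle_right x p c).trans (add_le_add hx hp)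
    _ = √2 * (2 * r) := by rw [two_mul r]

theorem distE_le_distBd_frontier_closedBall {c x p : ℝ × ℝ} {r R : ℝ}
    (hr : r * (1 + 2 * √2) ≤ R) (hx : x ∈ closedBall c r) (hp : p ∈ closedBall c r) :
    distE x p ≤ distBd x (frontier (closedBall c R)) := by
  have hr₀ : 0 ≤ r := nonempty_closedBall.1 ⟨x, hx⟩
  calc distE x p ≤ √2 * (2 * r) := distE_le_of_mem_closedBall hx hp
    _ ≤ R - r := by linarith
    _ ≤ distBd x (frontier (closedBall c R)) :=
      sub_le_distBd_frontier_closedBall (le_trans (by positivity) hr) hx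

theorem stmt_11_general (a : ℝ × ℝ) {ℓ δ : ℝ} (hδ : δ ≤ ℓ / (1 + 2 * √2)) {p : ℝ × ℝ}
    (hp : p ∈ square (a.1 + (ℓ - δ) / 2, a.2 + (ℓ - δ) / 2) δ) :
    square (a.1 + (ℓ - δ) / 2, a.2 + (ℓ - δ) / 2) δ ⊆ Dcell a ℓ p := by
  rw [concentric_square_eq_closedBall] at hp ⊢
  intro x hx
  have hδ₀ : 0 ≤ δ / 2 := nonempty_closedBall.1 ⟨x, hx⟩
  have hδℓ : δ / 2 * (1 + 2 * √2) ≤ ℓ / 2 := by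
    linarith [(le_div_iff₀ (by positivity)).1 hδ]
  have hle : δ / 2 ≤ ℓ / 2 := (le_mul_of_one_le_right hδ₀ (by simp)).trans hδℓ
  rw [Dcell, square_eq_closedBall]
  exact ⟨closedBall_subset_closedBall hle hx, distE_le_distBd_frontier_closedBall hδℓ hx hp⟩

/-- Let `C` be an axis-aligned square of side `ℓ > 0` and let `C'` be the concentric
axis-aligned square of side `δ = ℓ/(1 + 2√2)`. Then every point `x ∈ C'` is at least as
close to any `p ∈ C'` as to the boundary `∂C`; that is, `C' ⊆ D_p` for every `p ∈ C'`. -/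
theorem stmt_11 (a : ℝ × ℝ) (ℓ : ℝ) (hℓ : 0 < ℓ) (δ : ℝ)
    (hδ : δ = ℓ / (1 + 2 * Real.sqrt 2)) :
    ∀ p ∈ square (a.1 + (ℓ - δ) / 2, a.2 + (ℓ - δ) / 2) δ,
      (∀ x ∈ square (a.1 + (ℓ - δ) / 2, a.2 + (ℓ - δ) / 2) δ,
          distE x p ≤ distBd x (frontier (square a ℓ))) ∧
        square (a.1 + (ℓ - δ) / 2, a.2 + (ℓ - δ) / 2) δ ⊆ Dcell a ℓ p := fun _ hp =>
  have hsub := stmt_11_general a hδ.le hp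
  ⟨fun _ hx => (hsub hx).2, hsub⟩
end
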